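/- arXiv:2404.01772 — 3 statements merged into one kernel-verified Lean document; each statement's English description precedes it below -/
import Mathlib

section
/- Let V and W be complex vector spaces, let p₀, p₁ be seminorms on V and q₀, q₁ be seminorms on W, and let T : V → W be a linear map for which there exist constants C₀, C₁ > 0 with q₀(T v) ≤ C₀ p₀(v) and q₁(T v) ≤ C₁ p₁(v) for all v ∈ V. Then for every θ with 0 < θ < 1 and every v ∈ V one has (∫₀^∞ t^{-2θ} K₂^{q}(t; T v)² dt/t)^{1/2} ≤ C₀^{1-θ} C₁^{θ} (∫₀^∞ t^{-2θ} K₂^{p}(t; v)² dt/t)^{1/2}, where the integrals are taken in the extended nonnegative reals. -/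
open MeasureTheory Set
open scoped ENNReal

/-- The quadratic K-functional associated to a pair of seminorms `p₀, p₁` on a complex
vector space: `K₂(t; v) = inf { √(p₀(v₀)² + t² p₁(v₁)²) : v = v₀ + v₁ }`. -/
noncomputable def K2 {V : Type*} [AddCommGroup V] [Module ℂ V]
    (p₀ p₁ : Seminorm ℂ V) (t : ℝ) (v : V) : ℝ :=
  sInf {r : ℝ | ∃ v₀ v₁ : V, v = v₀ + v₁ ∧
    r = Real.sqrt ((p₀ v₀) ^ 2 + t ^ 2 * (p₁ v₁) ^ 2)}

/-- The interpolation quasi-norm `(∫₀^∞ t^{-2θ} K₂(t; v)² dt/t)^{1/2}`, as an extended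
nonnegative real. -/
noncomputable def interpNorm {V : Type*} [AddCommGroup V] [Module ℂ V]
    (p₀ p₁ : Seminorm ℂ V) (θ : ℝ) (v : V) : ℝ≥0∞ :=
  (∫⁻ t in Ioi (0 : ℝ),
    ENNReal.ofReal (t ^ (-(2 * θ)) * (K2 p₀ p₁ t v) ^ 2 / t)) ^ ((1 : ℝ) / 2)

/-!
Applying `T` to a decomposition `v = v₀ + v₁` gives `K₂(t; T v) ≤ C₀ K₂(C₁ t / C₀; v)`, and
because `dt / t` is invariant under dilations, replacing `t` by `a t` multiplies the weighted norm
`(∫₀^∞ t^{-2θ} f(t)² dt / t)^{1/2}` by `a^θ`. With `a = C₁ / C₀` the resulting constant is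
`C₀ (C₁ / C₀)^θ = C₀^{1-θ} C₁^θ`.
-/

section KFunctional

variable {V W : Type*} [AddCommGroup V] [Module ℂ V] [AddCommGroup W] [Module ℂ W]

theorem K2_nonneg (p₀ p₁ : Seminorm ℂ V) (t : ℝ) (v : V) : 0 ≤ K2 p₀ p₁ t v := by
  apply Real.sInf_nonneg
  rintro _ ⟨v₀, v₁, -, rfl⟩
  exact Real.sqrt_nonneg _

theorem K2_add_le (p₀ p₁ : Seminorm ℂ V) (t : ℝ) (v₀ v₁ : V) :
    K2 p₀ p₁ t (v₀ + v₁) ≤ √(p₀ v₀ ^ 2 + t ^ 2 * p₁ v₁ ^ 2) := by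
  refine csInf_le ⟨0, ?_⟩ ⟨v₀, v₁, rfl, rfl⟩
  rintro _ ⟨w₀, w₁, -, rfl⟩
  exact Real.sqrt_nonneg _

theorem le_K2 {p₀ p₁ : Seminorm ℂ V} {t r : ℝ} {v : V}
    (h : ∀ v₀ v₁ : V, v = v₀ + v₁ → r ≤ √(p₀ v₀ ^ 2 + t ^ 2 * p₁ v₁ ^ 2)) :
    r ≤ K2 p₀ p₁ t v := by
  refine le_csInf ⟨_, v, 0, (add_zero v).symm, rfl⟩ ?_
  rintro _ ⟨v₀, v₁, hv, rfl⟩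
  exact h v₀ v₁ hv

theorem K2_map_le {F : Type*} [FunLike F V W] [AddHomClass F V W]
    (p₀ p₁ : Seminorm ℂ V) (q₀ q₁ : Seminorm ℂ W) (T : F) {C₀ C₁ : ℝ} (hC₀ : 0 < C₀)
    (h₀ : ∀ v : V, q₀ (T v) ≤ C₀ * p₀ v) (h₁ : ∀ v : V, q₁ (T v) ≤ C₁ * p₁ v)
    (t : ℝ) (v : V) :
    K2 q₀ q₁ t (T v) ≤ C₀ * K2 p₀ p₁ (C₁ / C₀ * t) v := by
  rw [← div_le_iff₀' hC₀]
  refine le_K2 fun v₀ v₁ hv ↦ ?_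
  rw [div_le_iff₀' hC₀]
  calc K2 q₀ q₁ t (T v)
      = K2 q₀ q₁ t (T v₀ + T v₁) := by rw [hv, map_add]
    _ ≤ √(q₀ (T v₀) ^ 2 + t ^ 2 * q₁ (T v₁) ^ 2) := K2_add_le q₀ q₁ t _ _
    _ ≤ √((C₀ * p₀ v₀) ^ 2 + t ^ 2 * (C₁ * p₁ v₁) ^ 2) := by
      gcongr
      exacts [h₀ v₀, h₁ v₁]
    _ = √(C₀ ^ 2 * (p₀ v₀ ^ 2 + (C₁ / C₀ * t) ^ 2 * p₁ v₁ ^ 2)) := by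
      congr 1
      field_simp
    _ = C₀ * √(p₀ v₀ ^ 2 + (C₁ / C₀ * t) ^ 2 * p₁ v₁ ^ 2) := by
      rw [Real.sqrt_mul (sq_nonneg C₀), Real.sqrt_sq hC₀.le]

end KFunctional

theorem setLIntegral_Ioi_zero_comp_mul_left {a : ℝ} (ha : 0 < a) (f : ℝ → ℝ≥0∞) :
    ENNReal.ofReal a * ∫⁻ t in Ioi (0 : ℝ), f (a * t) = ∫⁻ t in Ioi (0 : ℝ), f t := by
  have change_of_variables := lintegral_image_eq_lintegral_abs_deriv_mul measurableSet_Ioi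
    (fun t _ ↦ (hasDerivAt_const_mul a).hasDerivWithinAt)
    (mul_right_injective₀ ha.ne').injOn f (s := Ioi (0 : ℝ))
  rw [image_mul_left_Ioi ha, mul_zero, abs_of_pos ha,
    lintegral_const_mul' _ _ ENNReal.ofReal_ne_top] at change_of_variables
  exact change_of_variables.symm

/-- The functional `Φ_θ(f) = (∫₀^∞ (t^{-θ} |f(t)|)² dt / t)^{1/2}` of real interpolation, whose
value at the K-functional is the interpolation quasi-norm. The integrand is written as in
`interpNorm`, so that the two agree definitionally. -/
noncomputable def thetaNorm (θ : ℝ) (f : ℝ → ℝ) : ℝ≥0∞ :=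
  (∫⁻ t in Ioi (0 : ℝ), ENNReal.ofReal (t ^ (-(2 * θ)) * f t ^ 2 / t)) ^ ((1 : ℝ) / 2)

theorem interpNorm_eq_thetaNorm_K2 {V : Type*} [AddCommGroup V] [Module ℂ V]
    (p₀ p₁ : Seminorm ℂ V) (θ : ℝ) (v : V) :
    interpNorm p₀ p₁ θ v = thetaNorm θ fun t ↦ K2 p₀ p₁ t v :=
  rfl

theorem thetaNorm_mono (θ : ℝ) {f g : ℝ → ℝ} (h : ∀ t, 0 < t → |f t| ≤ |g t|) :
    thetaNorm θ f ≤ thetaNorm θ g := by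
  refine ENNReal.rpow_le_rpow (setLIntegral_mono' measurableSet_Ioi fun t (ht : 0 < t) ↦ ?_)
    (by norm_num)
  have hsq : f t ^ 2 ≤ g t ^ 2 := sq_le_sq.2 (h t ht)
  gcongr

theorem ofReal_sq_mul_rpow_half {c : ℝ} (hc : 0 ≤ c) (x : ℝ≥0∞) :
    (ENNReal.ofReal (c ^ 2) * x) ^ ((1 : ℝ) / 2) = ENNReal.ofReal c * x ^ ((1 : ℝ) / 2) := by
  rw [ENNReal.mul_rpow_of_nonneg _ _ (by norm_num), ENNReal.ofReal_rpow_of_nonneg (by positivity)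
    (by norm_num), ← Real.sqrt_eq_rpow, Real.sqrt_sq hc]

theorem thetaNorm_const_mul (θ : ℝ) {c : ℝ} (hc : 0 ≤ c) (f : ℝ → ℝ) :
    thetaNorm θ (fun t ↦ c * f t) = ENNReal.ofReal c * thetaNorm θ f := by
  unfold thetaNorm
  rw [← ofReal_sq_mul_rpow_half hc, ← lintegral_const_mul' _ _ ENNReal.ofReal_ne_top]
  congr! 3 with t
  rw [← ENNReal.ofReal_mul (sq_nonneg c)]
  ring_nf

theorem thetaNorm_comp_mul_left (θ : ℝ) {a : ℝ} (ha : 0 < a) (f : ℝ → ℝ) :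
    thetaNorm θ (fun t ↦ f (a * t)) = ENNReal.ofReal (a ^ θ) * thetaNorm θ f := by
  unfold thetaNorm
  rw [← ofReal_sq_mul_rpow_half (by positivity), ← setLIntegral_Ioi_zero_comp_mul_left ha
      (fun t ↦ ENNReal.ofReal (t ^ (-(2 * θ)) * f t ^ 2 / t)),
    ← lintegral_const_mul' _ _ ENNReal.ofReal_ne_top,
    ← lintegral_const_mul' _ _ ENNReal.ofReal_ne_top]
  congr 1
  refine setLIntegral_congr_fun measurableSet_Ioi fun t (ht : 0 < t) ↦ ?_
  have weight_mul : (a ^ θ) ^ 2 * (a * t) ^ (-(2 * θ)) = t ^ (-(2 * θ)) := by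
    rw [Real.mul_rpow ha.le ht.le, ← Real.rpow_mul_natCast ha.le, ← mul_assoc,
      ← Real.rpow_add ha]
    simp [mul_comm]
  rw [← ENNReal.ofReal_mul ha.le, ← ENNReal.ofReal_mul (by positivity), ← weight_mul]
  congr 1
  field_simp

theorem interpolation_quasinorm_bound_general
    {V W F : Type*} [AddCommGroup V] [Module ℂ V] [AddCommGroup W] [Module ℂ W]
    [FunLike F V W] [AddHomClass F V W]
    (p₀ p₁ : Seminorm ℂ V) (q₀ q₁ : Seminorm ℂ W) (T : F)
    {C₀ C₁ : ℝ} (hC₀ : 0 < C₀) (hC₁ : 0 < C₁)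
    (h₀ : ∀ v : V, q₀ (T v) ≤ C₀ * p₀ v) (h₁ : ∀ v : V, q₁ (T v) ≤ C₁ * p₁ v)
    (θ : ℝ) (v : V) :
    interpNorm q₀ q₁ θ (T v)
      ≤ ENNReal.ofReal (C₀ ^ (1 - θ) * C₁ ^ θ) * interpNorm p₀ p₁ θ v := by
  have constant_eq : C₀ * (C₁ / C₀) ^ θ = C₀ ^ (1 - θ) * C₁ ^ θ := by
    rw [Real.div_rpow hC₁.le hC₀.le, Real.rpow_sub hC₀, Real.rpow_one]
    ring
  simp only [interpNorm_eq_thetaNorm_K2]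
  calc thetaNorm θ (fun t ↦ K2 q₀ q₁ t (T v))
      ≤ thetaNorm θ (fun t ↦ C₀ * K2 p₀ p₁ (C₁ / C₀ * t) v) :=
        thetaNorm_mono θ fun t _ ↦
          abs_le_abs_of_nonneg (K2_nonneg ..) (K2_map_le p₀ p₁ q₀ q₁ T hC₀ h₀ h₁ t v)
    _ = ENNReal.ofReal C₀ * (ENNReal.ofReal ((C₁ / C₀) ^ θ) *
          thetaNorm θ (fun t ↦ K2 p₀ p₁ t v)) := by
        rw [thetaNorm_const_mul θ hC₀.le,
          thetaNorm_comp_mul_left θ (div_pos hC₁ hC₀) (fun t ↦ K2 p₀ p₁ t v)]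
    _ = ENNReal.ofReal (C₀ ^ (1 - θ) * C₁ ^ θ) * thetaNorm θ (fun t ↦ K2 p₀ p₁ t v) := by
        rw [← mul_assoc, ← ENNReal.ofReal_mul hC₀.le, constant_eq]

theorem interpolation_quasinorm_bound
    {V W : Type*} [AddCommGroup V] [Module ℂ V] [AddCommGroup W] [Module ℂ W]
    (p₀ p₁ : Seminorm ℂ V) (q₀ q₁ : Seminorm ℂ W) (T : V →ₗ[ℂ] W)
    (C₀ C₁ : ℝ) (hC₀ : 0 < C₀) (hC₁ : 0 < C₁)
    (h₀ : ∀ v : V, q₀ (T v) ≤ C₀ * p₀ v) (h₁ : ∀ v : V, q₁ (T v) ≤ C₁ * p₁ v)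
    (θ : ℝ) (hθ₀ : 0 < θ) (hθ₁ : θ < 1) (v : V) :
    interpNorm q₀ q₁ θ (T v)
      ≤ ENNReal.ofReal (C₀ ^ (1 - θ) * C₁ ^ θ) * interpNorm p₀ p₁ θ v :=
  interpolation_quasinorm_bound_general p₀ p₁ q₀ q₁ T hC₀ hC₁ h₀ h₁ θ v
end

section
/- Let Ω ⊆ ℝᴺ be an open set with Lebesgue measure and let ω₀, ω₁ : Ω → ℝ be measurable functions with ω₀(x) > 0 and ω₁(x) > 0 for all x ∈ Ω. Let a : Ω → ℂ be measurable and suppose a = b₀ + b₁ for some b₀ ∈ E(ω₀) and b₁ ∈ E(ω₁). Then for every t > 0, the infimum over all decompositions a = a₀ + a₁ with a₀ ∈ E(ω₀), a₁ ∈ E(ω₁) of the quantity ∫_Ω |a₀(x)|² ω₀(x) dx + t² ∫_Ω |a₁(x)|² ω₁(x) dx equals ∫_Ω (t² ω₀(x) ω₁(x) / (ω₀(x) + t² ω₁(x))) |a(x)|² dx. -/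
open MeasureTheory Set
open scoped ENNReal

/-!
Pointwise, splitting a vector `z` as `z₀ + z₁` at cost `p ‖z₀‖² + q ‖z₁‖²` costs at least
`(p q / (p + q)) ‖z‖²`, with equality for `z₀ = (q / (p + q)) z`. Integrating the pointwise bound
with `p = ω₀`, `q = t² ω₁` gives the lower bound for the infimum. The pointwise optimal splitting is
measurable in `x`, and both of its parts have finite norm as soon as the integral on the right is
finite, so the infimum is then attained. If that integral is infinite, the lower bound leaves no
decomposition with finite norms, and both sides are `⊤`.
-/

section Pointwise

variable {E : Type*} [NormedAddCommGroup E]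

lemma norm_sq_add_mul_parallelSum_le {p q : ℝ} (hp : 0 ≤ p) (hq : 0 ≤ q) (z w : E) :
    ‖z + w‖ ^ 2 * (p * q / (p + q)) ≤ ‖z‖ ^ 2 * p + ‖w‖ ^ 2 * q := by
  calc ‖z + w‖ ^ 2 * (p * q / (p + q))
      ≤ (‖z‖ + ‖w‖) ^ 2 * (p * q / (p + q)) := by gcongr; exact norm_add_le z w
    _ = (‖z‖ + ‖w‖) ^ 2 * (p * q) / (p + q) := by ring
    _ ≤ ‖z‖ ^ 2 * p + ‖w‖ ^ 2 * q := by
      refine div_le_of_le_mul₀ (by positivity) (by positivity) ?_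
      linear_combination sq_nonneg (p * ‖z‖ - q * ‖w‖)

lemma norm_sq_optimal_splitting [NormedSpace ℝ E] {p q : ℝ} (hpq : p + q ≠ 0) (z : E) :
    ‖(q / (p + q)) • z‖ ^ 2 * p + ‖z - (q / (p + q)) • z‖ ^ 2 * q
      = ‖z‖ ^ 2 * (p * q / (p + q)) := by
  have hcompl : z - (q / (p + q)) • z = (p / (p + q)) • z := by
    rw [sub_eq_iff_eq_add', ← add_smul, ← add_div, add_comm q, div_self hpq, one_smul]
  simp only [hcompl, norm_smul, mul_pow, Real.norm_eq_abs, sq_abs]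
  field_simp
  ring

end Pointwise

section WeightedSqNorm

variable {α E : Type*} [MeasurableSpace α] {μ : Measure α} [NormedAddCommGroup E]

/-- The squared norm of `u` in the weighted space `E(ω)`, with values in `[0, ∞]`, so that a
measurable `u` lies in `E(ω)` if and only if its value is finite. -/
noncomputable def weightedSqNorm (μ : Measure α) (ω : α → ℝ) (u : α → E) : ℝ≥0∞ :=
  ∫⁻ x, ENNReal.ofReal (‖u x‖ ^ 2 * ω x) ∂μ

lemma weightedSqNorm_const_smul {c : ℝ} (hc : 0 ≤ c) (ω : α → ℝ) (u : α → E) :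
    weightedSqNorm μ (c • ω) u = ENNReal.ofReal c * weightedSqNorm μ ω u := by
  simp only [weightedSqNorm, Pi.smul_apply, smul_eq_mul, mul_left_comm _ c, ENNReal.ofReal_mul hc]
  exact lintegral_const_mul' _ _ ENNReal.ofReal_ne_top

lemma weightedSqNorm_add_weightedSqNorm {p q : α → ℝ} (hpm : AEMeasurable p μ)
    (hp : 0 ≤ᵐ[μ] p) (hq : 0 ≤ᵐ[μ] q) {u : α → E} (hu : AEStronglyMeasurable u μ) (v : α → E) :
    weightedSqNorm μ p u + weightedSqNorm μ q v
      = ∫⁻ x, ENNReal.ofReal (‖u x‖ ^ 2 * p x + ‖v x‖ ^ 2 * q x) ∂μ := by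
  have hum : AEMeasurable (fun x => ENNReal.ofReal (‖u x‖ ^ 2 * p x)) μ :=
    ((hu.norm.aemeasurable.pow_const 2).mul hpm).ennreal_ofReal
  rw [weightedSqNorm, weightedSqNorm, ← lintegral_add_left' hum]
  refine lintegral_congr_ae ?_
  filter_upwards [hp, hq] with x hpx hqx
  exact (ENNReal.ofReal_add (mul_nonneg (sq_nonneg _) hpx) (mul_nonneg (sq_nonneg _) hqx)).symm

lemma weightedSqNorm_parallelSum_add_le {p q : α → ℝ} (hpm : AEMeasurable p μ)
    (hp : 0 ≤ᵐ[μ] p) (hq : 0 ≤ᵐ[μ] q) {u : α → E} (hu : AEStronglyMeasurable u μ) (v : α → E) :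
    weightedSqNorm μ (p * q / (p + q)) (u + v)
      ≤ weightedSqNorm μ p u + weightedSqNorm μ q v := by
  rw [weightedSqNorm_add_weightedSqNorm hpm hp hq hu]
  refine lintegral_mono_ae ?_
  filter_upwards [hp, hq] with x hpx hqx
  exact ENNReal.ofReal_le_ofReal (norm_sq_add_mul_parallelSum_le hpx hqx _ _)

variable [NormedSpace ℝ E]

lemma exists_add_eq_weightedSqNorm_add_eq {p q : α → ℝ} (hpm : Measurable p) (hqm : Measurable q)
    (hp : 0 ≤ᵐ[μ] p) (hq : 0 ≤ᵐ[μ] q) (hpq : ∀ᵐ x ∂μ, p x + q x ≠ 0)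
    {a : α → E} (ha : StronglyMeasurable a) :
    ∃ a₀ a₁ : α → E, StronglyMeasurable a₀ ∧ StronglyMeasurable a₁ ∧ a₀ + a₁ = a ∧
      weightedSqNorm μ p a₀ + weightedSqNorm μ q a₁ = weightedSqNorm μ (p * q / (p + q)) a := by
  have ha₀ : StronglyMeasurable ((q / (p + q)) • a) :=
    (hqm.div (hpm.add hqm)).stronglyMeasurable.smul ha
  refine ⟨_, a - (q / (p + q)) • a, ha₀, ha.sub ha₀, add_sub_cancel _ a, ?_⟩
  rw [weightedSqNorm_add_weightedSqNorm hpm.aemeasurable hp hq ha₀.aestronglyMeasurable]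
  refine lintegral_congr_ae ?_
  filter_upwards [hpq] with x hpqx
  exact congrArg ENNReal.ofReal (norm_sq_optimal_splitting hpqx (a x))

theorem K_functional_weighted_L2_formula_general {ω₀ ω₁ : α → ℝ}
    (hω₀m : Measurable ω₀) (hω₁m : Measurable ω₁) (hω₀ : 0 ≤ᵐ[μ] ω₀) (hω₁ : 0 ≤ᵐ[μ] ω₁)
    {a : α → E} (ha : StronglyMeasurable a) {t : ℝ} (ht : t ≠ 0)
    (hω : ∀ᵐ x ∂μ, ω₀ x + t ^ 2 * ω₁ x ≠ 0) :
    sInf {r : ℝ≥0∞ | ∃ a₀ a₁ : α → E,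
        StronglyMeasurable a₀ ∧ weightedSqNorm μ ω₀ a₀ < ⊤ ∧
        StronglyMeasurable a₁ ∧ weightedSqNorm μ ω₁ a₁ < ⊤ ∧
        a = a₀ + a₁ ∧
        r = weightedSqNorm μ ω₀ a₀ + ENNReal.ofReal (t ^ 2) * weightedSqNorm μ ω₁ a₁}
      = ∫⁻ x, ENNReal.ofReal (t ^ 2 * ω₀ x * ω₁ x / (ω₀ x + t ^ 2 * ω₁ x) * ‖a x‖ ^ 2) ∂μ := by
  set q : α → ℝ := t ^ 2 • ω₁ with hq_def
  have hqm : Measurable q := hω₁m.const_smul (t ^ 2)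
  have hq : 0 ≤ᵐ[μ] q := hω₁.mono fun x hx => mul_nonneg (sq_nonneg t) hx
  have hscale (u : α → E) :
      ENNReal.ofReal (t ^ 2) * weightedSqNorm μ ω₁ u = weightedSqNorm μ q u :=
    (weightedSqNorm_const_smul (sq_nonneg t) ω₁ u).symm
  have hrhs : ∫⁻ x, ENNReal.ofReal
        (t ^ 2 * ω₀ x * ω₁ x / (ω₀ x + t ^ 2 * ω₁ x) * ‖a x‖ ^ 2) ∂μ
      = weightedSqNorm μ (ω₀ * q / (ω₀ + q)) a :=
    lintegral_congr fun x => congrArg ENNReal.ofReal <| by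
      simp only [hq_def, Pi.div_apply, Pi.mul_apply, Pi.add_apply, Pi.smul_apply, smul_eq_mul]
      ring
  simp only [hrhs, hscale]
  refine le_antisymm (le_of_forall_gt fun c hc => ?_) (le_sInf ?_)
  · obtain ⟨a₀, a₁, ha₀, ha₁, hadd, hopt⟩ :=
      exists_add_eq_weightedSqNorm_add_eq hω₀m hqm hω₀ hq hω ha
    obtain ⟨h₀, h₁⟩ := ENNReal.add_lt_top.1 (hopt.trans_lt hc.lt_top)
    rw [← hscale] at h₁
    have h₁_fin : weightedSqNorm μ ω₁ a₁ < ⊤ :=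
      ENNReal.lt_top_of_mul_ne_top_right h₁.ne (ENNReal.ofReal_pos.2 (by positivity)).ne'
    exact sInf_lt_iff.2 ⟨_, ⟨a₀, a₁, ha₀, h₀, ha₁, h₁_fin, hadd.symm, rfl⟩, hopt.trans_lt hc⟩
  · rintro _ ⟨a₀, a₁, ha₀, -, -, -, rfl, rfl⟩
    exact weightedSqNorm_parallelSum_add_le hω₀m.aemeasurable hω₀ hq ha₀.aestronglyMeasurable a₁

end WeightedSqNorm

theorem K_functional_weighted_L2_formula
    {N : ℕ} (Ω : Set (Fin N → ℝ)) (hΩ : IsOpen Ω)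
    (ω₀ ω₁ : (Fin N → ℝ) → ℝ) (hω₀m : Measurable ω₀) (hω₁m : Measurable ω₁)
    (hω₀ : ∀ x ∈ Ω, 0 < ω₀ x) (hω₁ : ∀ x ∈ Ω, 0 < ω₁ x)
    (a b₀ b₁ : (Fin N → ℝ) → ℂ) (ham : Measurable a)
    (hb₀m : Measurable b₀) (hb₀ : (∫⁻ x in Ω, ENNReal.ofReal (‖b₀ x‖ ^ 2 * ω₀ x)) < ⊤)
    (hb₁m : Measurable b₁) (hb₁ : (∫⁻ x in Ω, ENNReal.ofReal (‖b₁ x‖ ^ 2 * ω₁ x)) < ⊤)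
    (hab : a = b₀ + b₁) (t : ℝ) (ht : 0 < t) :
    sInf {r : ℝ≥0∞ | ∃ a₀ a₁ : (Fin N → ℝ) → ℂ,
        Measurable a₀ ∧ (∫⁻ x in Ω, ENNReal.ofReal (‖a₀ x‖ ^ 2 * ω₀ x)) < ⊤ ∧
        Measurable a₁ ∧ (∫⁻ x in Ω, ENNReal.ofReal (‖a₁ x‖ ^ 2 * ω₁ x)) < ⊤ ∧
        a = a₀ + a₁ ∧
        r = (∫⁻ x in Ω, ENNReal.ofReal (‖a₀ x‖ ^ 2 * ω₀ x))
            + ENNReal.ofReal (t ^ 2) * ∫⁻ x in Ω, ENNReal.ofReal (‖a₁ x‖ ^ 2 * ω₁ x)}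
      = ∫⁻ x in Ω,
          ENNReal.ofReal (t ^ 2 * ω₀ x * ω₁ x / (ω₀ x + t ^ 2 * ω₁ x) * ‖a x‖ ^ 2) := by
  have hΩ_ae {P : (Fin N → ℝ) → Prop} (h : ∀ x ∈ Ω, P x) : ∀ᵐ x ∂volume.restrict Ω, P x :=
    ae_restrict_of_forall_mem hΩ.measurableSet h
  simpa only [weightedSqNorm, stronglyMeasurable_iff_measurable] using
    K_functional_weighted_L2_formula_general hω₀m hω₁m (hΩ_ae fun x hx => (hω₀ x hx).le)
      (hΩ_ae fun x hx => (hω₁ x hx).le) ham.stronglyMeasurable ht.ne'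
      (hΩ_ae fun x hx => (add_pos (hω₀ x hx) (mul_pos (pow_pos ht 2) (hω₁ x hx))).ne')
end

section
/- Let Ω ⊆ ℝᴺ be an open set with Lebesgue measure, let ω₀, ω₁ : Ω → ℝ be measurable with ω₀(x) > 0 and ω₁(x) > 0 for all x ∈ Ω, let 0 < θ < 1, and set ω_θ = ω₀^{1−θ} ω₁^{θ}. Let a : Ω → ℂ be measurable with a = b₀ + b₁ for some b₀ ∈ E(ω₀), b₁ ∈ E(ω₁), and define K₂(t; a) = inf { (‖a₀‖_{ω₀}² + t² ‖a₁‖_{ω₁}²)^{1/2} : a = a₀ + a₁, a₀ ∈ E(ω₀), a₁ ∈ E(ω₁) }. Then ∫₀^∞ t^{−2θ} K₂(t; a)² dt/t = C_θ · ∫_Ω |a(x)|² ω_θ(x) dx as extended nonnegative reals, where C_θ = ∫₀^∞ s^{1−2θ}/(1 + s²) ds is a finite positive constant; in particular ∫₀^∞ t^{−2θ} K₂(t; a)² dt/t < ∞ if and only if a ∈ E(ω_θ). -/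
open MeasureTheory Set
open scoped ENNReal

/-- The quadratic K-functional for the pair of weighted `L²` spaces `E(ω₀), E(ω₁)` on `Ω`:
`K₂(t; a) = inf { (‖a₀‖_{ω₀}² + t² ‖a₁‖_{ω₁}²)^{1/2} : a = a₀ + a₁, a₀ ∈ E(ω₀), a₁ ∈ E(ω₁) }`,
as an extended nonnegative real. -/
noncomputable def K2w {N : ℕ} (Ω : Set (Fin N → ℝ)) (ω₀ ω₁ : (Fin N → ℝ) → ℝ) (t : ℝ)
    (a : (Fin N → ℝ) → ℂ) : ℝ≥0∞ :=
  sInf {r : ℝ≥0∞ | ∃ a₀ a₁ : (Fin N → ℝ) → ℂ,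
      Measurable a₀ ∧ (∫⁻ x in Ω, ENNReal.ofReal (‖a₀ x‖ ^ 2 * ω₀ x)) < ⊤ ∧
      Measurable a₁ ∧ (∫⁻ x in Ω, ENNReal.ofReal (‖a₁ x‖ ^ 2 * ω₁ x)) < ⊤ ∧
      a = a₀ + a₁ ∧
      r = ((∫⁻ x in Ω, ENNReal.ofReal (‖a₀ x‖ ^ 2 * ω₀ x))
            + ENNReal.ofReal (t ^ 2) * ∫⁻ x in Ω, ENNReal.ofReal (‖a₁ x‖ ^ 2 * ω₁ x))
          ^ ((1 : ℝ) / 2)}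

/-!
Minimising `‖u‖² p + ‖v‖² q` over `u + v = z` gives `‖z‖² pq / (p + q)`, attained at
`u = q / (p + q) • z`. Doing this at almost every point with `p = ω₀ x` and `q = t² ω₁ x` shows that
`K₂(t; a)²` is the squared norm of `a` for the weight `ω₀ t² ω₁ / (ω₀ + t² ω₁)`. By Tonelli the
`t`-integral may be computed pointwise in `x`, and the substitution `t = (ω₀ x / ω₁ x)^{1/2} s`
turns it into `C_θ ω₀(x)^{1-θ} ω₁(x)^θ`.
-/

/-- The parallel sum `p ∥ q = pq / (p + q)` of two nonnegative reals. The value `0 ∥ 0 = 0` given by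
division by zero is the right one: it is the infimum in `norm_add_sq_mul_parallelSum_le`. -/
noncomputable def parallelSum (p q : ℝ) : ℝ := p * q / (p + q)

/-- The constant `C_θ = ∫₀^∞ s^{1-2θ} / (1 + s²) ds` by which the squared interpolation norm
of parameter `θ` differs from the squared norm of `E(ω₀^{1-θ} ω₁^θ)`. -/
noncomputable def interpolationConst (θ : ℝ) : ℝ≥0∞ :=
  ∫⁻ s in Ioi (0 : ℝ), ENNReal.ofReal (s ^ (1 - 2 * θ) / (1 + s ^ 2))

/-- The squared norm `‖u‖_ω²` of the space `E(ω)`, for functions on a measure space with values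
in a normed group; it is `⊤` when `u ∉ E(ω)`. -/
noncomputable def weightedL2NormSq {α E : Type*} [MeasurableSpace α] [NormedAddCommGroup E]
    (μ : Measure α) (ω : α → ℝ) (u : α → E) : ℝ≥0∞ :=
  ∫⁻ x, ENNReal.ofReal (‖u x‖ ^ 2 * ω x) ∂μ

/-- The quadratic K-functional of the pair `E(ω₀), E(ω₁)` over a measure space, for functions with
values in a normed group; `K2w Ω` is the case of Lebesgue measure on `Ω`. It is `⊤`, the infimum of
the empty set, when `a ∉ E(ω₀) + E(ω₁)`. -/
noncomputable def weightedK2 {α E : Type*} [MeasurableSpace α] [NormedAddCommGroup E]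
    [MeasurableSpace E] (μ : Measure α) (ω₀ ω₁ : α → ℝ) (t : ℝ) (a : α → E) : ℝ≥0∞ :=
  sInf {r : ℝ≥0∞ | ∃ a₀ a₁ : α → E,
    Measurable a₀ ∧ weightedL2NormSq μ ω₀ a₀ < ⊤ ∧
    Measurable a₁ ∧ weightedL2NormSq μ ω₁ a₁ < ⊤ ∧
    a = a₀ + a₁ ∧
    r = (weightedL2NormSq μ ω₀ a₀ + ENNReal.ofReal (t ^ 2) * weightedL2NormSq μ ω₁ a₁)
      ^ ((1 : ℝ) / 2)}

section ParallelSum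

variable {E : Type*} [NormedAddCommGroup E] {p q : ℝ}

lemma parallelSum_nonneg (hp : 0 ≤ p) (hq : 0 ≤ q) : 0 ≤ parallelSum p q := by
  unfold parallelSum
  positivity

@[fun_prop]
lemma measurable_parallelSum {α : Type*} [MeasurableSpace α] {f g : α → ℝ} (hf : Measurable f)
    (hg : Measurable g) : Measurable fun x => parallelSum (f x) (g x) := by
  unfold parallelSum
  fun_prop

lemma norm_add_sq_mul_parallelSum_le (u v : E) (hp : 0 ≤ p) (hq : 0 ≤ q) :
    ‖u + v‖ ^ 2 * parallelSum p q ≤ ‖u‖ ^ 2 * p + ‖v‖ ^ 2 * q := by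
  rcases (add_nonneg hp hq).eq_or_lt with hpq | hpq
  · simp only [parallelSum, ← hpq, div_zero, mul_zero]
    positivity
  calc ‖u + v‖ ^ 2 * parallelSum p q
      ≤ (‖u‖ + ‖v‖) ^ 2 * parallelSum p q := by
        gcongr
        · exact parallelSum_nonneg hp hq
        · exact norm_add_le u v
    _ ≤ ‖u‖ ^ 2 * p + ‖v‖ ^ 2 * q := by
        rw [parallelSum, ← mul_div_assoc, div_le_iff₀ hpq]
        nlinarith [sq_nonneg (p * ‖u‖ - q * ‖v‖)]

lemma norm_smul_sq_add_norm_smul_sq_eq_parallelSum [NormedSpace ℝ E] (z : E)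
    (hp : 0 ≤ p) (hq : 0 ≤ q) :
    ‖(q / (p + q)) • z‖ ^ 2 * p + ‖(1 - q / (p + q)) • z‖ ^ 2 * q
      = ‖z‖ ^ 2 * parallelSum p q := by
  simp only [norm_smul, mul_pow, Real.norm_eq_abs, sq_abs, parallelSum]
  rcases (add_nonneg hp hq).eq_or_lt with hpq | hpq
  · obtain ⟨rfl, rfl⟩ : p = 0 ∧ q = 0 := ⟨by linarith, by linarith⟩
    simp
  · field_simp
    ring

end ParallelSum

section HalfLineIntegrals

open Filter Topology

lemma lintegral_rpow_div_one_add_sq_pos (β : ℝ) :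
    0 < ∫⁻ s in Ioi (0 : ℝ), ENNReal.ofReal (s ^ β / (1 + s ^ 2)) := by
  have support_subset : Ioi (0 : ℝ) ⊆
      Function.support fun s : ℝ => ENNReal.ofReal (s ^ β / (1 + s ^ 2)) := by
    intro s (hs : 0 < s)
    exact (ENNReal.ofReal_pos.2 (by positivity)).ne'
  rw [setLIntegral_pos_iff (by fun_prop), inter_eq_right.2 support_subset]
  simp

lemma integrableOn_rpow_div_one_add_sq {β : ℝ} (hβ : -1 < β) (hβ' : β < 1) :
    IntegrableOn (fun s : ℝ => s ^ β / (1 + s ^ 2)) (Ioi 0) := by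
  have continuous_inv : Continuous fun s : ℝ => (1 + s ^ 2)⁻¹ :=
    Continuous.inv₀ (by fun_prop) fun s => by positivity
  have isBigO_top : (fun s : ℝ => (1 + s ^ 2)⁻¹) =O[atTop] (· ^ (-2 : ℝ)) := by
    refine Asymptotics.IsBigO.of_bound 1 ?_
    filter_upwards [eventually_gt_atTop 0] with s hs
    rw [one_mul, Real.rpow_neg hs.le, Real.rpow_two, Real.norm_of_nonneg (by positivity),
      Real.norm_of_nonneg (by positivity)]
    gcongr
    linarith
  have isBigO_zero : (fun s : ℝ => (1 + s ^ 2)⁻¹) =O[𝓝[>] 0] (· ^ (-0 : ℝ)) := by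
    simpa using (continuous_inv.tendsto 0).mono_left nhdsWithin_le_nhds |>.isBigO_one ℝ
  simpa [div_eq_mul_inv] using mellin_convergent_of_isBigO_scalar (s := β + 1)
    (continuous_inv.locallyIntegrable.locallyIntegrableOn _) isBigO_top (by linarith)
    isBigO_zero (by linarith)

lemma interpolationConst_pos (θ : ℝ) : 0 < interpolationConst θ :=
  lintegral_rpow_div_one_add_sq_pos _

lemma interpolationConst_lt_top {θ : ℝ} (hθ₀ : 0 < θ) (hθ₁ : θ < 1) : interpolationConst θ < ⊤ :=
  (integrableOn_rpow_div_one_add_sq (by linarith) (by linarith)).setLIntegral_lt_top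

lemma lintegral_Ioi_eq_mul_lintegral_comp_mul_left (f : ℝ → ℝ≥0∞) {c : ℝ} (hc : 0 < c) :
    ∫⁻ t in Ioi 0, f t = ENNReal.ofReal c * ∫⁻ s in Ioi 0, f (c * s) := by
  have image_eq : (c * ·) '' Ioi 0 = Ioi 0 := by simp [image_mul_left_Ioi hc]
  have hasDeriv (s : ℝ) : HasDerivWithinAt (c * ·) c (Ioi 0) s := by
    simpa using ((hasDerivAt_id s).const_mul c).hasDerivWithinAt
  have change_of_variables := lintegral_image_eq_lintegral_abs_deriv_mul measurableSet_Ioi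
    (fun s _ => hasDeriv s) (mul_right_injective₀ hc.ne').injOn f
  rwa [image_eq, abs_of_pos hc, lintegral_const_mul' _ _ ENNReal.ofReal_ne_top]
    at change_of_variables

/-- Here `r = (p / q)^{1/2}`, so that `p ∥ (r s)² q = p s² / (1 + s²)`. -/
lemma mul_rpow_div_mul_parallelSum_sq_mul (θ : ℝ) {q r s : ℝ} (hq : 0 < q) (hr : 0 < r)
    (hs : 0 < s) :
    r * ((r * s) ^ (-(2 * θ)) / (r * s) * parallelSum (r ^ 2 * q) ((r * s) ^ 2 * q))
      = s ^ (1 - 2 * θ) / (1 + s ^ 2) * ((r ^ 2 * q) ^ (1 - θ) * q ^ θ) := by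
  have split_s : s ^ (1 - 2 * θ) = s * s ^ (-(2 * θ)) := by
    rw [sub_eq_add_neg, Real.rpow_add hs, Real.rpow_one]
  have split_r : (r ^ 2) ^ (1 - θ) = r ^ 2 * r ^ (-(2 * θ)) := by
    rw [← Real.rpow_natCast_mul hr.le, Nat.cast_ofNat, mul_one_sub, sub_eq_add_neg,
      Real.rpow_add hr, Real.rpow_two]
  have split_q : q ^ (1 - θ) * q ^ θ = q := by
    rw [← Real.rpow_add hq, sub_add_cancel, Real.rpow_one]
  rw [Real.mul_rpow (sq_nonneg r) hq.le, mul_assoc (_ ^ (1 - θ)), split_q, split_r, split_s,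
    Real.mul_rpow hr.le hs.le, parallelSum]
  field_simp

lemma lintegral_rpow_mul_parallelSum_of_pos (θ : ℝ) {p q : ℝ} (hp : 0 < p) (hq : 0 < q) :
    ∫⁻ t in Ioi (0 : ℝ),
        ENNReal.ofReal (t ^ (-(2 * θ)) / t) * ENNReal.ofReal (parallelSum p (t ^ 2 * q))
      = interpolationConst θ * ENNReal.ofReal (p ^ (1 - θ) * q ^ θ) := by
  obtain ⟨r, hr, rfl⟩ : ∃ r : ℝ, 0 < r ∧ r ^ 2 * q = p :=
    ⟨√(p / q), by positivity, by rw [Real.sq_sqrt (by positivity), div_mul_cancel₀ _ hq.ne']⟩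
  rw [lintegral_Ioi_eq_mul_lintegral_comp_mul_left _ hr, interpolationConst,
    ← lintegral_const_mul' _ _ ENNReal.ofReal_ne_top,
    ← lintegral_mul_const' _ _ ENNReal.ofReal_ne_top]
  refine setLIntegral_congr_fun measurableSet_Ioi fun s (hs : 0 < s) => ?_
  rw [← ENNReal.ofReal_mul (by positivity), ← ENNReal.ofReal_mul hr.le,
    ← ENNReal.ofReal_mul (by positivity), mul_rpow_div_mul_parallelSum_sq_mul θ hq hr hs]

lemma lintegral_rpow_mul_parallelSum {θ p q : ℝ} (hθ₀ : 0 < θ) (hθ₁ : θ < 1) (hp : 0 ≤ p)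
    (hq : 0 ≤ q) :
    ∫⁻ t in Ioi (0 : ℝ),
        ENNReal.ofReal (t ^ (-(2 * θ)) / t) * ENNReal.ofReal (parallelSum p (t ^ 2 * q))
      = interpolationConst θ * ENNReal.ofReal (p ^ (1 - θ) * q ^ θ) := by
  rcases hp.eq_or_lt with rfl | hp
  · simp [parallelSum, Real.zero_rpow (sub_pos.2 hθ₁).ne']
  rcases hq.eq_or_lt with rfl | hq
  · simp [parallelSum, Real.zero_rpow hθ₀.ne']
  exact lintegral_rpow_mul_parallelSum_of_pos θ hp hq

end HalfLineIntegrals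

section WeightedL2

variable {α E : Type*} [MeasurableSpace α] {μ : Measure α} [NormedAddCommGroup E]
  {ω₀ ω₁ : α → ℝ}

lemma weightedL2NormSq_const_mul (ω : α → ℝ) (u : α → E) {c : ℝ} (hc : 0 ≤ c) :
    weightedL2NormSq μ (fun x => c * ω x) u = ENNReal.ofReal c * weightedL2NormSq μ ω u := by
  simp_rw [weightedL2NormSq, mul_left_comm _ c, ENNReal.ofReal_mul hc]
  exact lintegral_const_mul' _ _ ENNReal.ofReal_ne_top

lemma lintegral_mul_weightedL2NormSq {β : Type*} [MeasurableSpace β] {ν : Measure β} [SFinite μ]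
    [SFinite ν] {k : β → ℝ≥0∞} {w : β → α → ℝ} {u : α → E} (hk : Measurable k)
    (hw : Measurable (Function.uncurry w)) (hu : Measurable fun x => ‖u x‖) :
    ∫⁻ t, k t * weightedL2NormSq μ (w t) u ∂ν
      = ∫⁻ x, ENNReal.ofReal (‖u x‖ ^ 2) * ∫⁻ t, k t * ENNReal.ofReal (w t x) ∂ν ∂μ := by
  have hw_left (t : β) : Measurable (w t) := hw.of_uncurry_left
  calc
    _ = ∫⁻ t, ∫⁻ x, ENNReal.ofReal (‖u x‖ ^ 2) * (k t * ENNReal.ofReal (w t x)) ∂μ ∂ν := by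
      refine lintegral_congr fun t => ?_
      rw [weightedL2NormSq, ← lintegral_const_mul _ (by fun_prop)]
      simp only [ENNReal.ofReal_mul (sq_nonneg ‖u _‖), mul_left_comm (k t)]
    _ = ∫⁻ x, ∫⁻ t, ENNReal.ofReal (‖u x‖ ^ 2) * (k t * ENNReal.ofReal (w t x)) ∂ν ∂μ :=
      lintegral_lintegral_swap (((hu.comp measurable_snd).pow_const 2).ennreal_ofReal.mul
        ((hk.comp measurable_fst).mul hw.ennreal_ofReal)).aemeasurable
    _ = _ := lintegral_congr fun x => lintegral_const_mul' _ _ ENNReal.ofReal_ne_top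

variable [MeasurableSpace E]

lemma weightedL2NormSq_add_weightedL2NormSq [OpensMeasurableSpace E] {u : α → E}
    (hu : Measurable u) (v : α → E) (hω₀m : Measurable ω₀)
    (hω₀ : ∀ᵐ x ∂μ, 0 ≤ ω₀ x) (hω₁ : ∀ᵐ x ∂μ, 0 ≤ ω₁ x) :
    weightedL2NormSq μ ω₀ u + weightedL2NormSq μ ω₁ v
      = ∫⁻ x, ENNReal.ofReal (‖u x‖ ^ 2 * ω₀ x + ‖v x‖ ^ 2 * ω₁ x) ∂μ := by
  rw [weightedL2NormSq, weightedL2NormSq, ← lintegral_add_left (by fun_prop)]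
  refine lintegral_congr_ae ?_
  filter_upwards [hω₀, hω₁] with x h₀ h₁
  rw [← ENNReal.ofReal_add (by positivity) (by positivity)]

lemma weightedL2NormSq_parallelSum_add_le [OpensMeasurableSpace E] {u : α → E}
    (hu : Measurable u) (v : α → E) (hω₀m : Measurable ω₀)
    (hω₀ : ∀ᵐ x ∂μ, 0 ≤ ω₀ x) (hω₁ : ∀ᵐ x ∂μ, 0 ≤ ω₁ x) :
    weightedL2NormSq μ (fun x => parallelSum (ω₀ x) (ω₁ x)) (u + v)
      ≤ weightedL2NormSq μ ω₀ u + weightedL2NormSq μ ω₁ v := by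
  rw [weightedL2NormSq_add_weightedL2NormSq hu v hω₀m hω₀ hω₁]
  refine lintegral_mono_ae ?_
  filter_upwards [hω₀, hω₁] with x h₀ h₁
  exact ENNReal.ofReal_le_ofReal (norm_add_sq_mul_parallelSum_le _ _ h₀ h₁)

variable [BorelSpace E] [SecondCountableTopology E] [NormedSpace ℝ E] {a : α → E}

lemma exists_add_eq_weightedL2NormSq_parallelSum (ha : Measurable a) (hω₀m : Measurable ω₀)
    (hω₁m : Measurable ω₁) (hω₀ : ∀ᵐ x ∂μ, 0 ≤ ω₀ x) (hω₁ : ∀ᵐ x ∂μ, 0 ≤ ω₁ x) :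
    ∃ a₀ a₁ : α → E, Measurable a₀ ∧ Measurable a₁ ∧ a = a₀ + a₁ ∧
      weightedL2NormSq μ ω₀ a₀ + weightedL2NormSq μ ω₁ a₁
        = weightedL2NormSq μ (fun x => parallelSum (ω₀ x) (ω₁ x)) a := by
  have measurable_left : Measurable fun x => (ω₁ x / (ω₀ x + ω₁ x)) • a x := by fun_prop
  refine ⟨fun x => (ω₁ x / (ω₀ x + ω₁ x)) • a x, fun x => (1 - ω₁ x / (ω₀ x + ω₁ x)) • a x,
    measurable_left, by fun_prop, ?_, ?_⟩
  · ext x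
    simp [← add_smul]
  · rw [weightedL2NormSq_add_weightedL2NormSq measurable_left _ hω₀m hω₀ hω₁]
    refine lintegral_congr_ae ?_
    filter_upwards [hω₀, hω₁] with x h₀ h₁
    rw [norm_smul_sq_add_norm_smul_sq_eq_parallelSum _ h₀ h₁]

theorem weightedK2_eq_weightedL2NormSq_parallelSum (ha : Measurable a) (hω₀m : Measurable ω₀)
    (hω₁m : Measurable ω₁) (hω₀ : ∀ᵐ x ∂μ, 0 ≤ ω₀ x) (hω₁ : ∀ᵐ x ∂μ, 0 ≤ ω₁ x) {t : ℝ}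
    (ht : t ≠ 0) :
    weightedK2 μ ω₀ ω₁ t a
      = weightedL2NormSq μ (fun x => parallelSum (ω₀ x) (t ^ 2 * ω₁ x)) a ^ ((1 : ℝ) / 2) := by
  have hω₁t : ∀ᵐ x ∂μ, 0 ≤ t ^ 2 * ω₁ x := hω₁.mono fun x hx => by positivity
  apply le_antisymm
  · obtain ⟨a₀, a₁, ha₀, ha₁, h_add, h_eq⟩ :=
      exists_add_eq_weightedL2NormSq_parallelSum ha hω₀m (hω₁m.const_mul (t ^ 2)) hω₀ hω₁t
    rw [← h_eq, weightedL2NormSq_const_mul _ _ (sq_nonneg t)]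
    rcases eq_or_ne (weightedL2NormSq μ ω₀ a₀ + ENNReal.ofReal (t ^ 2) * weightedL2NormSq μ ω₁ a₁) ⊤
      with h_top | h_top
    · simp [h_top]
    obtain ⟨h₀, h₁⟩ := ENNReal.add_ne_top.1 h_top
    have ht_sq : ENNReal.ofReal (t ^ 2) ≠ 0 := (ENNReal.ofReal_pos.2 (by positivity)).ne'
    exact sInf_le ⟨a₀, a₁, ha₀, h₀.lt_top, ha₁, ENNReal.lt_top_of_mul_ne_top_right h₁ ht_sq,
      h_add, rfl⟩
  · refine le_sInf ?_
    rintro _ ⟨a₀, a₁, ha₀, -, -, -, rfl, rfl⟩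
    rw [← weightedL2NormSq_const_mul _ _ (sq_nonneg t)]
    gcongr
    exact weightedL2NormSq_parallelSum_add_le ha₀ a₁ hω₀m hω₀ hω₁t

theorem lintegral_rpow_mul_weightedK2_sq [SFinite μ] (ha : Measurable a) (hω₀m : Measurable ω₀)
    (hω₁m : Measurable ω₁) (hω₀ : ∀ᵐ x ∂μ, 0 ≤ ω₀ x) (hω₁ : ∀ᵐ x ∂μ, 0 ≤ ω₁ x) {θ : ℝ}
    (hθ₀ : 0 < θ) (hθ₁ : θ < 1) :
    ∫⁻ t in Ioi (0 : ℝ), ENNReal.ofReal (t ^ (-(2 * θ)) / t) * weightedK2 μ ω₀ ω₁ t a ^ (2 : ℝ)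
      = interpolationConst θ * weightedL2NormSq μ (fun x => ω₀ x ^ (1 - θ) * ω₁ x ^ θ) a := by
  calc
    _ = ∫⁻ t in Ioi (0 : ℝ), ENNReal.ofReal (t ^ (-(2 * θ)) / t) *
          weightedL2NormSq μ (fun x => parallelSum (ω₀ x) (t ^ 2 * ω₁ x)) a := by
      refine setLIntegral_congr_fun measurableSet_Ioi fun t (ht : 0 < t) => ?_
      rw [weightedK2_eq_weightedL2NormSq_parallelSum ha hω₀m hω₁m hω₀ hω₁ ht.ne',
        ← ENNReal.rpow_mul, one_div_mul_cancel two_ne_zero, ENNReal.rpow_one]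
    _ = ∫⁻ x, ENNReal.ofReal (‖a x‖ ^ 2) * (∫⁻ t in Ioi (0 : ℝ),
          ENNReal.ofReal (t ^ (-(2 * θ)) / t) *
            ENNReal.ofReal (parallelSum (ω₀ x) (t ^ 2 * ω₁ x))) ∂μ :=
      lintegral_mul_weightedL2NormSq (by fun_prop) (by unfold Function.uncurry; fun_prop)
        ha.norm
    _ = ∫⁻ x, interpolationConst θ *
          ENNReal.ofReal (‖a x‖ ^ 2 * (ω₀ x ^ (1 - θ) * ω₁ x ^ θ)) ∂μ := by
      refine lintegral_congr_ae ?_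
      filter_upwards [hω₀, hω₁] with x h₀ h₁
      rw [lintegral_rpow_mul_parallelSum hθ₀ hθ₁ h₀ h₁, mul_left_comm,
        ← ENNReal.ofReal_mul (by positivity)]
    _ = _ := lintegral_const_mul _ (by fun_prop)

theorem interpolation_of_weighted_L2_general [SFinite μ] (hω₀m : Measurable ω₀)
    (hω₁m : Measurable ω₁) (hω₀ : ∀ᵐ x ∂μ, 0 ≤ ω₀ x) (hω₁ : ∀ᵐ x ∂μ, 0 ≤ ω₁ x) {θ : ℝ}
    (hθ₀ : 0 < θ) (hθ₁ : θ < 1) (ha : Measurable a) :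
    0 < interpolationConst θ ∧ interpolationConst θ < ⊤ ∧
    ∫⁻ t in Ioi (0 : ℝ), ENNReal.ofReal (t ^ (-(2 * θ)) / t) * weightedK2 μ ω₀ ω₁ t a ^ (2 : ℝ)
      = interpolationConst θ * weightedL2NormSq μ (fun x => ω₀ x ^ (1 - θ) * ω₁ x ^ θ) a ∧
    (∫⁻ t in Ioi (0 : ℝ), ENNReal.ofReal (t ^ (-(2 * θ)) / t) * weightedK2 μ ω₀ ω₁ t a ^ (2 : ℝ) < ⊤
      ↔ weightedL2NormSq μ (fun x => ω₀ x ^ (1 - θ) * ω₁ x ^ θ) a < ⊤) := by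
  have const_pos := interpolationConst_pos θ
  have const_lt_top := interpolationConst_lt_top hθ₀ hθ₁
  have norm_eq := lintegral_rpow_mul_weightedK2_sq ha hω₀m hω₁m hω₀ hω₁ hθ₀ hθ₁
  refine ⟨const_pos, const_lt_top, norm_eq, ?_⟩
  rw [norm_eq]
  exact ⟨fun h => ENNReal.lt_top_of_mul_ne_top_right h.ne const_pos.ne',
    ENNReal.mul_lt_top const_lt_top⟩

end WeightedL2

theorem interpolation_of_weighted_L2
    {N : ℕ} (Ω : Set (Fin N → ℝ)) (hΩ : IsOpen Ω)
    (ω₀ ω₁ : (Fin N → ℝ) → ℝ) (hω₀m : Measurable ω₀) (hω₁m : Measurable ω₁)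
    (hω₀ : ∀ x ∈ Ω, 0 < ω₀ x) (hω₁ : ∀ x ∈ Ω, 0 < ω₁ x)
    (θ : ℝ) (hθ₀ : 0 < θ) (hθ₁ : θ < 1)
    (a b₀ b₁ : (Fin N → ℝ) → ℂ) (ham : Measurable a)
    (hb₀m : Measurable b₀) (hb₀ : (∫⁻ x in Ω, ENNReal.ofReal (‖b₀ x‖ ^ 2 * ω₀ x)) < ⊤)
    (hb₁m : Measurable b₁) (hb₁ : (∫⁻ x in Ω, ENNReal.ofReal (‖b₁ x‖ ^ 2 * ω₁ x)) < ⊤)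
    (hab : a = b₀ + b₁) :
    0 < (∫⁻ s in Ioi (0 : ℝ), ENNReal.ofReal (s ^ (1 - 2 * θ) / (1 + s ^ 2))) ∧
    (∫⁻ s in Ioi (0 : ℝ), ENNReal.ofReal (s ^ (1 - 2 * θ) / (1 + s ^ 2))) < ⊤ ∧
    (∫⁻ t in Ioi (0 : ℝ),
        ENNReal.ofReal (t ^ (-(2 * θ)) / t) * (K2w Ω ω₀ ω₁ t a) ^ (2 : ℝ))
      = (∫⁻ s in Ioi (0 : ℝ), ENNReal.ofReal (s ^ (1 - 2 * θ) / (1 + s ^ 2))) *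
          ∫⁻ x in Ω, ENNReal.ofReal (‖a x‖ ^ 2 * (ω₀ x ^ (1 - θ) * ω₁ x ^ θ)) ∧
    ((∫⁻ t in Ioi (0 : ℝ),
        ENNReal.ofReal (t ^ (-(2 * θ)) / t) * (K2w Ω ω₀ ω₁ t a) ^ (2 : ℝ)) < ⊤
      ↔ (∫⁻ x in Ω, ENNReal.ofReal (‖a x‖ ^ 2 * (ω₀ x ^ (1 - θ) * ω₁ x ^ θ))) < ⊤) :=
  interpolation_of_weighted_L2_general hω₀m hω₁m
    (ae_restrict_of_forall_mem hΩ.measurableSet fun x hx => (hω₀ x hx).le)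
    (ae_restrict_of_forall_mem hΩ.measurableSet fun x hx => (hω₁ x hx).le) hθ₀ hθ₁ ham
end
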